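/- Let C be an abelian category with Ext groups and let (F,G) be a complete cotorsion pair in Thick(F) such that Ext^i(A,B)=0 for all A∈F, B∈G and all i≥1. Then (F, F∩G) is a left Frobenius pair in C and (F∩G)^∧ = G. -/

import Mathlib

/-!
Within `T = Thick(F)` each half of the cotorsion pair is determined by the other: if `M ∈ T` and
`Ext¹(M, G) = 0`, then an approximation `0 → G₁ → F₁ → M → 0` splits, so `M` is a summand of
`F₁` and lies in `F` (`IsCompleteCotorsionPairIn.left_of_ext_one`); dually for `G`
(`IsCompleteCotorsionPairIn.right_of_ext_one`). Closure of `F` and `G` under extensions follows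
from long exact `Ext` sequences, and with `Ext² (F, G) = 0` they also show that `F` is
closed under cocones and that `G` is closed under cones, whence `(F ∩ G)^∧ ⊆ G`.

For `(F ∩ G)^∧ ⊇ G`, finiteness of the resolution comes from a dimension-shifting bound rather
than from a description of `Thick(F)`: the objects `M` for which some `n` satisfies
`Ext^i(M, G) = 0` for all `i > n` form a thick class containing `F`
(`ExtVanishAbove.exists_of_thickClosure`). If `M ∈ G` has such a bound `n + 1`, then in
`0 → G₁ → F₁ → M → 0` one has `F₁ ∈ F ∩ G`, and `G₁ ∈ G` has bound `n`; if the bound is `0`, then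
`M ∈ F ∩ G`. Induction on `n` gives the resolution.
-/

open CategoryTheory

universe w v u

variable {C : Type u} [Category.{v} C] [Abelian C]

/-- `IsSES A B X` : there is a short exact sequence `0 → A → B → X → 0` in `C`. -/
def IsSES (A B X : C) : Prop :=
  ∃ (f : A ⟶ B) (g : B ⟶ X) (zero : f ≫ g = 0),
    (ShortComplex.mk f g zero).ShortExact

/-- `P` is closed under extensions. -/
def ClosedUnderExtensions (P : C → Prop) : Prop :=
  ∀ ⦃A B X : C⦄, IsSES A B X → P A → P X → P B

/-- `P` is closed under cones. -/
def ClosedUnderCones (P : C → Prop) : Prop :=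
  ∀ ⦃A B X : C⦄, IsSES A B X → P A → P B → P X

/-- `P` is closed under cocones. -/
def ClosedUnderCocones (P : C → Prop) : Prop :=
  ∀ ⦃A B X : C⦄, IsSES A B X → P B → P X → P A

/-- `P` is closed under isomorphisms. -/
def ClosedUnderIsos (P : C → Prop) : Prop :=
  ∀ ⦃X Y : C⦄, (X ≅ Y) → P X → P Y

/-- `P` is closed under direct summands. -/
def ClosedUnderSummands (P : C → Prop) : Prop :=
  ∀ ⦃X Y : C⦄, P X → (∃ (i : Y ⟶ X) (r : X ⟶ Y), i ≫ r = 𝟙 Y) → P Y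

/-- `HasResLength P n M` : there is an exact sequence `0 → W_n → ⋯ → W_0 → M → 0`
with all `W_i` in `P`. -/
inductive HasResLength (P : C → Prop) : ℕ → C → Prop
  | of_iso {M W : C} (hW : P W) (e : M ≅ W) : HasResLength P 0 M
  | step {K W M : C} {n : ℕ} (hW : P W) (h : IsSES K W M)
      (hK : HasResLength P n K) : HasResLength P (n + 1) M

/-- `P^∧` : the class of objects admitting a finite `P`-resolution. -/
def ResClass (P : C → Prop) : C → Prop := fun M => ∃ n, HasResLength P n M

/-- The resolution dimension `resdim_P(M) ∈ ℕ∞`. -/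
noncomputable def resDim (P : C → Prop) (M : C) : ℕ∞ :=
  sInf {n : ℕ∞ | ∃ m : ℕ, n = (m : ℕ∞) ∧ HasResLength P m M}

/-- `HasCoresLength P n M` : there is an exact sequence `0 → M → W_0 → ⋯ → W_n → 0`
with all `W_i` in `P`. -/
inductive HasCoresLength (P : C → Prop) : ℕ → C → Prop
  | of_iso {M W : C} (hW : P W) (e : M ≅ W) : HasCoresLength P 0 M
  | step {M W K : C} {n : ℕ} (hW : P W) (h : IsSES M W K)
      (hK : HasCoresLength P n K) : HasCoresLength P (n + 1) M

/-- `ω ∩ S` is a relative generator in `ω` : every `W ∈ ω` fits in a short exact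
sequence `0 → W' → F → W → 0` with `F ∈ ω ∩ S` and `W' ∈ ω`. -/
def RelGenerator (ω S : C → Prop) : Prop :=
  ∀ ⦃W : C⦄, ω W → ∃ (W' F : C), ω W' ∧ (ω F ∧ S F) ∧ IsSES W' F W

/-- `P` is left thick : closed under extensions, direct summands and cocones. -/
def LeftThick (P : C → Prop) : Prop :=
  ClosedUnderExtensions P ∧ ClosedUnderSummands P ∧ ClosedUnderCocones P

/-- `P` is right thick : closed under extensions, direct summands and cones. -/
def RightThick (P : C → Prop) : Prop :=
  ClosedUnderExtensions P ∧ ClosedUnderSummands P ∧ ClosedUnderCones P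

/-- The smallest thick class (closed under extensions, direct summands, cones and
cocones) containing `P`. -/
inductive ThickClosure (P : C → Prop) : C → Prop
  | of {M : C} (h : P M) : ThickClosure P M
  | ext {A B X : C} (h : IsSES A B X) (hA : ThickClosure P A) (hX : ThickClosure P X) :
      ThickClosure P B
  | cone {A B X : C} (h : IsSES A B X) (hA : ThickClosure P A) (hB : ThickClosure P B) :
      ThickClosure P X
  | cocone {A B X : C} (h : IsSES A B X) (hB : ThickClosure P B) (hX : ThickClosure P X) :
      ThickClosure P A
  | summand {X Y : C} (hX : ThickClosure P X) (i : Y ⟶ X) (r : X ⟶ Y) (hir : i ≫ r = 𝟙 Y) :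
      ThickClosure P Y

section WithExt

variable [HasExt.{w} C]

/-- `Ext^i(A, B) = 0` for all `A ∈ P`, `B ∈ Q` and all `i ≥ 1`. -/
def ExtVanish (P Q : C → Prop) : Prop :=
  ∀ ⦃A B : C⦄, P A → Q B → ∀ i : ℕ, 1 ≤ i → Subsingleton (Abelian.Ext A B i)

/-- `(X, ω)` is a left Frobenius pair in `C`. -/
def IsLeftFrobenius (X ω : C → Prop) : Prop :=
  LeftThick X ∧ (∀ ⦃W : C⦄, ω W → X W) ∧ ClosedUnderSummands ω ∧
    ExtVanish X ω ∧
    (∀ ⦃A : C⦄, X A → ∃ (W A' : C), ω W ∧ X A' ∧ IsSES A W A')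

/-- `(X, ω)` is a left Frobenius pair cut on `S`. -/
def IsLeftFrobeniusCut (X ω S : C → Prop) : Prop :=
  LeftThick X ∧
  IsLeftFrobenius (fun M => X M ∧ S M) (fun M => ω M ∧ S M) ∧
  (ExtVanish (fun M => ω M ∧ S M) ω ∧ RelGenerator ω S) ∧
  (ClosedUnderExtensions ω ∧ ClosedUnderSummands ω)

/-- `(A, B)` is a left weak AB context cut on `S`. -/
def IsLeftWeakABCut (A B S : C → Prop) : Prop :=
  IsLeftFrobeniusCut A (fun M => A M ∧ B M) S ∧
  RightThick (fun M => B M ∧ S M) ∧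
  (∀ ⦃M : C⦄, B M → S M → ResClass (fun N => A N ∧ S N) M)

/-- `(U, V)` is a left 1-cotorsion pair cut on `T`. -/
def IsLeft1CotorsionCut (U V T : C → Prop) : Prop :=
  ClosedUnderSummands U ∧
  (∀ ⦃A B : C⦄, U A → T A → V B → Subsingleton (Abelian.Ext A B 1)) ∧
  (∀ ⦃t : C⦄, T t → ∃ (K A : C), U A ∧ (∃ V' : C, V V' ∧ Nonempty (K ≅ V')) ∧ IsSES K A t)

/-- `(U, V)` is a right 1-cotorsion pair cut on `T`. -/
def IsRight1CotorsionCut (U V T : C → Prop) : Prop :=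
  ClosedUnderSummands V ∧
  (∀ ⦃A B : C⦄, U A → V B → T B → Subsingleton (Abelian.Ext A B 1)) ∧
  (∀ ⦃t : C⦄, T t → ∃ (B W : C), V B ∧ (∃ U' : C, U U' ∧ Nonempty (W ≅ U')) ∧ IsSES t B W)

/-- `(U, V)` is a 1-cotorsion pair cut on `T`. -/
def Is1CotorsionCut (U V T : C → Prop) : Prop :=
  IsLeft1CotorsionCut U V T ∧ IsRight1CotorsionCut U V T

/-- `(A, B)` is a left `n`-cotorsion pair cut on `S`. -/
def IsLeftNCotorsionCut (n : ℕ) (A B S : C → Prop) : Prop :=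
  ClosedUnderSummands A ∧
  (∀ ⦃X Y : C⦄, A X → S X → B Y → ∀ i : ℕ, 1 ≤ i → i ≤ n → Subsingleton (Abelian.Ext X Y i)) ∧
  (∀ ⦃s : C⦄, S s → ∃ (K X : C), A X ∧ (∃ m : ℕ, m ≤ n - 1 ∧ HasResLength B m K) ∧ IsSES K X s)

/-- `(A, B)` is a right `n`-cotorsion pair cut on `S`. -/
def IsRightNCotorsionCut (n : ℕ) (A B S : C → Prop) : Prop :=
  ClosedUnderSummands B ∧
  (∀ ⦃X Y : C⦄, A X → B Y → S Y → ∀ i : ℕ, 1 ≤ i → i ≤ n → Subsingleton (Abelian.Ext X Y i)) ∧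
  (∀ ⦃s : C⦄, S s → ∃ (Y W : C), B Y ∧ (∃ m : ℕ, m ≤ n - 1 ∧ HasCoresLength A m W) ∧ IsSES s Y W)

/-- `(F, G)` is a complete cotorsion pair in `T`. -/
def IsCompleteCotorsionPairIn (T F G : C → Prop) : Prop :=
  (∀ ⦃M : C⦄, F M → T M) ∧ (∀ ⦃M : C⦄, G M → T M) ∧
  ClosedUnderSummands F ∧ ClosedUnderSummands G ∧
  (∀ ⦃A B : C⦄, F A → G B → Subsingleton (Abelian.Ext A B 1)) ∧
  (∀ ⦃M : C⦄, T M →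
    (∃ G₁ F₁ : C, G G₁ ∧ F F₁ ∧ IsSES G₁ F₁ M) ∧
    (∃ G₂ F₂ : C, G G₂ ∧ F F₂ ∧ IsSES M G₂ F₂))

end WithExt

/-- `Ext^i(M, B) = 0` for all `B ∈ G` and all `i > n`; that is, the projective dimension of `M`
relative to `G` is at most `n`. -/
def ExtVanishAbove [HasExt.{w} C] (G : C → Prop) (n : ℕ) (M : C) : Prop :=
  ∀ ⦃B : C⦄, G B → ∀ i : ℕ, n < i → Subsingleton (Abelian.Ext M B i)

section LongExactSequences

variable [HasExt.{w} C] {A B X : C}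

lemma IsSES.subsingleton_ext_to_middle (h : IsSES A B X) (Y : C) (n : ℕ)
    (h₁ : Subsingleton (Abelian.Ext Y A n)) (h₃ : Subsingleton (Abelian.Ext Y X n)) :
    Subsingleton (Abelian.Ext Y B n) := by
  obtain ⟨f, g, zero, hS⟩ := h
  refine subsingleton_of_forall_eq 0 fun x => ?_
  obtain ⟨y, rfl⟩ := Abelian.Ext.covariant_sequence_exact₂ Y hS x (h₃.elim _ _)
  rw [h₁.elim y 0, Abelian.Ext.zero_comp]

lemma IsSES.subsingleton_ext_to_right (h : IsSES A B X) (Y : C) (n : ℕ)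
    (h₂ : Subsingleton (Abelian.Ext Y B n)) (h₁ : Subsingleton (Abelian.Ext Y A (n + 1))) :
    Subsingleton (Abelian.Ext Y X n) := by
  obtain ⟨f, g, zero, hS⟩ := h
  refine subsingleton_of_forall_eq 0 fun x => ?_
  obtain ⟨y, rfl⟩ := Abelian.Ext.covariant_sequence_exact₃ Y hS x rfl (h₁.elim _ _)
  rw [h₂.elim y 0, Abelian.Ext.zero_comp]

lemma IsSES.subsingleton_ext_from_middle (h : IsSES A B X) (Y : C) (n : ℕ)
    (h₁ : Subsingleton (Abelian.Ext A Y n)) (h₃ : Subsingleton (Abelian.Ext X Y n)) :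
    Subsingleton (Abelian.Ext B Y n) := by
  obtain ⟨f, g, zero, hS⟩ := h
  refine subsingleton_of_forall_eq 0 fun x => ?_
  obtain ⟨y, rfl⟩ := Abelian.Ext.contravariant_sequence_exact₂ hS Y x (h₁.elim _ _)
  rw [h₃.elim y 0, Abelian.Ext.comp_zero]

lemma IsSES.subsingleton_ext_from_left (h : IsSES A B X) (Y : C) (n : ℕ)
    (h₂ : Subsingleton (Abelian.Ext B Y n)) (h₃ : Subsingleton (Abelian.Ext X Y (n + 1))) :
    Subsingleton (Abelian.Ext A Y n) := by
  obtain ⟨f, g, zero, hS⟩ := h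
  refine subsingleton_of_forall_eq 0 fun x => ?_
  obtain ⟨y, rfl⟩ :=
    Abelian.Ext.contravariant_sequence_exact₁ hS Y x (Nat.add_comm 1 n) (h₃.elim _ _)
  rw [h₂.elim y 0, Abelian.Ext.comp_zero]

lemma IsSES.subsingleton_ext_from_right (h : IsSES A B X) (Y : C) (n : ℕ)
    (h₁ : Subsingleton (Abelian.Ext A Y n)) (h₂ : Subsingleton (Abelian.Ext B Y (n + 1))) :
    Subsingleton (Abelian.Ext X Y (n + 1)) := by
  obtain ⟨f, g, zero, hS⟩ := h
  refine subsingleton_of_forall_eq 0 fun x => ?_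
  obtain ⟨y, rfl⟩ :=
    Abelian.Ext.contravariant_sequence_exact₃ hS Y x (h₂.elim _ _) (Nat.add_comm 1 n)
  rw [h₁.elim y 0, Abelian.Ext.comp_zero]

lemma subsingleton_ext_of_retract {X Y : C} (i : Y ⟶ X) (r : X ⟶ Y) (hir : i ≫ r = 𝟙 Y)
    (Z : C) (n : ℕ) (hX : Subsingleton (Abelian.Ext X Z n)) :
    Subsingleton (Abelian.Ext Y Z n) := by
  refine subsingleton_of_forall_eq 0 fun x => ?_
  rw [← Abelian.Ext.mk₀_id_comp x, ← hir, ← Abelian.Ext.mk₀_comp_mk₀_assoc,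
    hX.elim ((Abelian.Ext.mk₀ r).comp x (zero_add n)) 0, Abelian.Ext.comp_zero]

lemma IsSES.exists_section (h : IsSES A B X) (hE : Subsingleton (Abelian.Ext X A 1)) :
    ∃ (i : X ⟶ B) (r : B ⟶ X), i ≫ r = 𝟙 X := by
  obtain ⟨f, g, zero, hS⟩ := h
  obtain ⟨y, hy⟩ := Abelian.Ext.covariant_sequence_exact₃ X hS (Abelian.Ext.mk₀ (𝟙 X))
    (zero_add 1) (hE.elim _ _)
  obtain ⟨s, rfl⟩ := (Abelian.Ext.mk₀_bijective X B).2 y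
  rw [Abelian.Ext.mk₀_comp_mk₀] at hy
  exact ⟨s, g, (Abelian.Ext.mk₀_bijective X X).1 hy⟩

lemma IsSES.exists_retraction (h : IsSES A B X) (hE : Subsingleton (Abelian.Ext X A 1)) :
    ∃ (i : A ⟶ B) (r : B ⟶ A), i ≫ r = 𝟙 A := by
  obtain ⟨f, g, zero, hS⟩ := h
  obtain ⟨y, hy⟩ := Abelian.Ext.contravariant_sequence_exact₁ hS A (Abelian.Ext.mk₀ (𝟙 A))
    (add_zero 1) (hE.elim _ _)
  obtain ⟨s, rfl⟩ := (Abelian.Ext.mk₀_bijective B A).2 y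
  rw [Abelian.Ext.mk₀_comp_mk₀] at hy
  exact ⟨f, s, (Abelian.Ext.mk₀_bijective A A).1 hy⟩

end LongExactSequences

/-- Every object of `Thick(F)` has finite projective dimension relative to `G`, because the objects
with this property form a thick class containing `F`. -/
lemma ExtVanishAbove.exists_of_thickClosure [HasExt.{w} C] {F G : C → Prop}
    (hvan : ExtVanish F G) {M : C} (hM : ThickClosure F M) : ∃ n, ExtVanishAbove G n M := by
  induction hM with
  | of h => exact ⟨0, fun B hB i hi => hvan h hB i hi⟩
  | ext h _ _ ihA ihX =>
    obtain ⟨a, ha⟩ := ihA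
    obtain ⟨b, hb⟩ := ihX
    exact ⟨max a b, fun Y hY i hi => h.subsingleton_ext_from_middle Y i
      (ha hY i (by omega)) (hb hY i (by omega))⟩
  | cone h _ _ ihA ihB =>
    obtain ⟨a, ha⟩ := ihA
    obtain ⟨b, hb⟩ := ihB
    refine ⟨max (a + 1) b, fun Y hY i hi => ?_⟩
    obtain ⟨j, rfl⟩ : ∃ j, i = j + 1 := ⟨i - 1, by omega⟩
    exact h.subsingleton_ext_from_right Y j (ha hY j (by omega)) (hb hY (j + 1) (by omega))
  | cocone h _ _ ihB ihX =>
    obtain ⟨a, ha⟩ := ihB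
    obtain ⟨b, hb⟩ := ihX
    exact ⟨max a b, fun Y hY i hi => h.subsingleton_ext_from_left Y i
      (ha hY i (by omega)) (hb hY (i + 1) (by omega))⟩
  | summand _ i r hir ih =>
    obtain ⟨a, ha⟩ := ih
    exact ⟨a, fun Y hY j hj => subsingleton_ext_of_retract i r hir Y j (ha hY j hj)⟩

namespace IsCompleteCotorsionPairIn

variable [HasExt.{w} C] {T F G : C → Prop}

lemma left_of_ext_one (h : IsCompleteCotorsionPairIn T F G) {M : C} (hM : T M)
    (hE : ∀ ⦃B : C⦄, G B → Subsingleton (Abelian.Ext M B 1)) : F M := by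
  obtain ⟨-, -, hF, -, -, happ⟩ := h
  obtain ⟨⟨G₁, F₁, hG₁, hF₁, hs⟩, -⟩ := happ hM
  exact hF hF₁ (hs.exists_section (hE hG₁))

lemma right_of_ext_one (h : IsCompleteCotorsionPairIn T F G) {M : C} (hM : T M)
    (hE : ∀ ⦃A : C⦄, F A → Subsingleton (Abelian.Ext A M 1)) : G M := by
  obtain ⟨-, -, -, hG, -, happ⟩ := h
  obtain ⟨-, ⟨G₂, F₂, hG₂, hF₂, hs⟩⟩ := happ hM
  exact hG hG₂ (hs.exists_retraction (hE hF₂))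

lemma left_extensions (h : IsCompleteCotorsionPairIn (ThickClosure F) F G) :
    ClosedUnderExtensions F := fun _ _ _ hs hA hX =>
  h.left_of_ext_one (.ext hs (.of hA) (.of hX)) fun Y hY =>
    hs.subsingleton_ext_from_middle Y 1 (h.2.2.2.2.1 hA hY) (h.2.2.2.2.1 hX hY)

lemma left_cocones (h : IsCompleteCotorsionPairIn (ThickClosure F) F G)
    (hvan : ExtVanish F G) : ClosedUnderCocones F := fun _ _ _ hs hB hX =>
  h.left_of_ext_one (.cocone hs (.of hB) (.of hX)) fun Y hY =>
    hs.subsingleton_ext_from_left Y 1 (hvan hB hY 1 le_rfl) (hvan hX hY 2 (by omega))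

lemma right_extensions (h : IsCompleteCotorsionPairIn (ThickClosure F) F G) :
    ClosedUnderExtensions G := fun _ _ _ hs hA hX =>
  h.right_of_ext_one (.ext hs (h.2.1 hA) (h.2.1 hX)) fun Y hY =>
    hs.subsingleton_ext_to_middle Y 1 (h.2.2.2.2.1 hY hA) (h.2.2.2.2.1 hY hX)

lemma right_cones (h : IsCompleteCotorsionPairIn (ThickClosure F) F G)
    (hvan : ExtVanish F G) : ClosedUnderCones G := fun _ _ _ hs hA hB =>
  h.right_of_ext_one (.cone hs (h.2.1 hA) (h.2.1 hB)) fun Y hY =>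
    hs.subsingleton_ext_to_right Y 1 (hvan hY hB 1 le_rfl) (hvan hY hA 2 (by omega))

lemma right_of_hasResLength (h : IsCompleteCotorsionPairIn (ThickClosure F) F G)
    (hvan : ExtVanish F G) {n : ℕ} {M : C}
    (hM : HasResLength (fun N => F N ∧ G N) n M) : G M := by
  induction hM with
  | of_iso hW e => exact h.2.2.2.1 hW.2 ⟨e.hom, e.inv, e.hom_inv_id⟩
  | step hW hs _ ih => exact h.right_cones hvan hs ih hW.2

/-- Dimension shifting along `0 → G₁ → F₁ → M → 0`: the projective dimension relative to `G` bounds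
the length of a resolution by objects of `F ∩ G`. -/
lemma hasResLength_of_extVanishAbove (h : IsCompleteCotorsionPairIn (ThickClosure F) F G)
    (hvan : ExtVanish F G) (n : ℕ) {M : C} (hG : G M) (hM : ExtVanishAbove G n M) :
    HasResLength (fun N => F N ∧ G N) n M := by
  induction n generalizing M with
  | zero =>
    exact .of_iso ⟨h.left_of_ext_one (h.2.1 hG) fun B hB => hM hB 1 (by omega), hG⟩ (Iso.refl M)
  | succ n ih =>
    obtain ⟨⟨G₁, F₁, hG₁, hF₁, hs⟩, -⟩ := h.2.2.2.2.2 (h.2.1 hG)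
    refine .step ⟨hF₁, h.right_extensions hs hG₁ hG⟩ hs (ih hG₁ fun B hB i hi => ?_)
    exact hs.subsingleton_ext_from_left B i (hvan hF₁ hB i (by omega)) (hM hB (i + 1) (by omega))

end IsCompleteCotorsionPairIn

theorem stmt_16 [HasExt.{w} C] (F G : C → Prop)
    (h : IsCompleteCotorsionPairIn (ThickClosure F) F G)
    (hvan : ExtVanish F G) :
    IsLeftFrobenius F (fun M => F M ∧ G M) ∧
    (∀ M : C, ResClass (fun N => F N ∧ G N) M ↔ G M) := by
  refine ⟨⟨⟨h.left_extensions, h.2.2.1, h.left_cocones hvan⟩, fun W hW => hW.1, ?_, ?_, ?_⟩,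
    fun M => ⟨fun ⟨_, hM⟩ => h.right_of_hasResLength hvan hM, fun hM => ?_⟩⟩
  · exact fun X Y hX hr => ⟨h.2.2.1 hX.1 hr, h.2.2.2.1 hX.2 hr⟩
  · exact fun A B hA hB => hvan hA hB.2
  · intro A hA
    obtain ⟨-, ⟨G₂, F₂, hG₂, hF₂, hs⟩⟩ := h.2.2.2.2.2 (.of hA)
    exact ⟨G₂, F₂, ⟨h.left_extensions hs hA hF₂, hG₂⟩, hF₂, hs⟩
  · obtain ⟨n, hn⟩ := ExtVanishAbove.exists_of_thickClosure hvan (h.2.1 hM)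
    exact ⟨n, h.hasResLength_of_extVanishAbove hvan n hM hn⟩
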